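/- For every real number α with 0 < α < 2, every nonnegative integer m, and every real x, the inverse Fourier transform satisfies (2π)^{-1/2} ∫_ℝ e^{-ξ²/2} ξ^{2m+1} |ξ|^{α} e^{i ξ x} dξ = i · (2^{(2m+2+α)/2} / √π) · Γ((2m+3+α)/2) · x · ₁F₁((2m+3+α)/2, 3/2; -x²/2). -/

import Mathlib

/-!
The weight `e^{-ξ²/2} ξ^{2m+1} |ξ|^α` is odd, so averaging the integrand over `ξ ↦ -ξ` turns the
inverse Fourier integral into `2i` times the sine integral
`∫_0^∞ t^s e^{-t²/2} sin (t x) dt` with `s = 2m + 1 + α`. That integral is computed in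
`integral_Ioi_rpow_mul_gaussian_mul_sin` by expanding the sine in its power series and integrating
term by term. Domination is by the series of `t^s e^{-t²/2} sinh (t |x|)`, which is integrable
because a Gaussian absorbs the exponential growth. The moments
`∫_0^∞ t^{s+2k+1} e^{-t²/2} dt = 2^{s/2+k} Γ((s+2)/2 + k)`, together with
`Γ(a + k) = (a)_k Γ(a)` and `(2k+1)! = 4^k k! (3/2)_k`, turn the resulting series into that
of `₁F₁`.
-/


open MeasureTheory Real Complex

noncomputable section

/-- Physicists' Hermite polynomials via the three-term recurrence. -/
def hermiteH : ℕ → ℝ → ℝ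
  | 0, _ => 1
  | 1, x => 2 * x
  | (n + 2), x => 2 * x * hermiteH (n + 1) x - 2 * (n + 1) * hermiteH n x

/-- Over-scaled Hermite functions `H̃ₙ(x) = (2ⁿ n!)^{-1/2} e^{-x²} Hₙ(x)`. -/
def overHermite (n : ℕ) (x : ℝ) : ℝ :=
  Real.exp (-x ^ 2) * hermiteH n x / Real.sqrt (2 ^ n * n.factorial)

/-- The confluent hypergeometric function `₁F₁(a, b; x)`. -/
def oneF1 (a b x : ℝ) : ℝ :=
  ∑' k : ℕ, ((ascPochhammer ℝ k).eval a / (ascPochhammer ℝ k).eval b) * x ^ k / k.factorial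

/-- Fourier transform `𝓕[u](ξ) = (2π)^{-1/2} ∫ u(x) e^{-i x ξ} dx`. -/
def FT (u : ℝ → ℂ) (ξ : ℝ) : ℂ :=
  (Real.sqrt (2 * Real.pi))⁻¹ * ∫ x : ℝ, u x * Complex.exp (-Complex.I * x * ξ)

/-- Inverse Fourier transform `𝓕⁻¹[v](x) = (2π)^{-1/2} ∫ v(ξ) e^{i x ξ} dξ`. -/
def IFT (v : ℝ → ℂ) (x : ℝ) : ℂ :=
  (Real.sqrt (2 * Real.pi))⁻¹ * ∫ ξ : ℝ, v ξ * Complex.exp (Complex.I * x * ξ)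

/-- Fractional Laplacian `(-Δ)^{α/2} u = 𝓕⁻¹[|ξ|^α 𝓕[u](ξ)]`. -/
def fracLap (α : ℝ) (u : ℝ → ℂ) (x : ℝ) : ℂ :=
  IFT (fun ξ => (|ξ| ^ α : ℝ) * FT u ξ) x

theorem integral_Ioi_rpow_mul_gaussian {s : ℝ} (hs : -1 < s) :
    ∫ t in Set.Ioi (0 : ℝ), t ^ s * Real.exp (-t ^ 2 / 2) =
      2 ^ ((s - 1) / 2) * Real.Gamma ((s + 1) / 2) := by
  have h := _root_.integral_rpow_mul_exp_neg_mul_rpow (p := 2) (q := s) (b := 1 / 2)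
    two_pos hs (by norm_num)
  have e : ∀ t : ℝ, -(1 / 2) * t ^ (2 : ℝ) = -t ^ 2 / 2 := fun t => by
    rw [Real.rpow_two]; ring
  simp only [e] at h
  rw [h, one_div, Real.inv_rpow two_pos.le, ← Real.rpow_neg two_pos.le,
    ← Real.rpow_neg_one 2, ← Real.rpow_add two_pos]
  congr 2
  ring

theorem integrableOn_Ioi_rpow_mul_gaussian {s : ℝ} (hs : -1 < s) :
    IntegrableOn (fun t : ℝ => t ^ s * Real.exp (-t ^ 2 / 2)) (Set.Ioi 0) := by
  refine (integrableOn_rpow_mul_exp_neg_mul_sq (b := 1 / 2) (by norm_num) hs).congr_fun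
    (fun t _ => ?_) measurableSet_Ioi
  dsimp only
  congr 2
  ring

/-- Integrability on the whole line is inferred from the nonvanishing of the integral: a function
that is not integrable has Bochner integral `0`. -/
theorem integrable_abs_rpow_mul_gaussian {s : ℝ} (hs : -1 < s) :
    Integrable (fun t : ℝ => |t| ^ s * Real.exp (-t ^ 2 / 2)) := by
  apply Integrable.of_integral_ne_zero
  have h := integral_comp_abs (f := fun t : ℝ => t ^ s * Real.exp (-t ^ 2 / 2))
  simp only [sq_abs] at h
  rw [h, integral_Ioi_rpow_mul_gaussian hs]
  have := Real.Gamma_pos_of_pos (s := (s + 1) / 2) (by linarith)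
  positivity

theorem Gamma_add_nat_eq {a : ℝ} (ha : 0 < a) (k : ℕ) :
    Real.Gamma (a + k) = (ascPochhammer ℝ k).eval a * Real.Gamma a := by
  induction k with
  | zero => simp
  | succ k ih =>
    rw [ascPochhammer_succ_eval, Nat.cast_succ, ← add_assoc,
      Real.Gamma_add_one (by positivity), ih]
    ring

theorem factorial_two_mul_add_one_eq (k : ℕ) :
    ((2 * k + 1).factorial : ℝ) =
      4 ^ k * k.factorial * (ascPochhammer ℝ k).eval (3 / 2 : ℝ) := by
  induction k with
  | zero => simp
  | succ k ih =>
    rw [show 2 * (k + 1) + 1 = (2 * k + 1) + 1 + 1 by ring, Nat.factorial_succ,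
      Nat.factorial_succ (2 * k + 1), Nat.factorial_succ k, ascPochhammer_succ_eval]
    push_cast
    rw [ih]
    ring

/-- Completing the square: `t |x| ≤ t² / 4 + x²`, so half of the Gaussian decay controls `sinh`. -/
theorem sinh_mul_gaussian_le (x t : ℝ) :
    Real.exp (-t ^ 2 / 2) * Real.sinh (t * |x|) ≤ Real.exp (x ^ 2) * Real.exp (-(1 / 4) * t ^ 2) := by
  have h1 : Real.sinh (t * |x|) ≤ Real.exp (t * |x|) := by
    rw [Real.sinh_eq]
    linarith [Real.exp_pos (t * |x|), Real.exp_pos (-(t * |x|))]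
  calc Real.exp (-t ^ 2 / 2) * Real.sinh (t * |x|)
      ≤ Real.exp (-t ^ 2 / 2) * Real.exp (t * |x|) := by gcongr
    _ = Real.exp (-t ^ 2 / 2 + t * |x|) := (Real.exp_add _ _).symm
    _ ≤ Real.exp (x ^ 2 + -(1 / 4) * t ^ 2) := by
        apply Real.exp_le_exp.2
        nlinarith [sq_nonneg (t / 2 - |x|), sq_abs x]
    _ = _ := Real.exp_add _ _

/-- The Mellin-type sine transform of the Gaussian, by termwise integration of the sine series. -/
theorem integral_Ioi_rpow_mul_gaussian_mul_sin {s : ℝ} (hs : -1 < s) (x : ℝ) :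
    ∫ t in Set.Ioi (0 : ℝ), t ^ s * Real.exp (-t ^ 2 / 2) * Real.sin (t * x) =
      2 ^ (s / 2) * Real.Gamma ((s + 2) / 2) * x *
        oneF1 ((s + 2) / 2) (3 / 2) (-x ^ 2 / 2) := by
  set w : ℝ → ℝ := fun t => t ^ s * Real.exp (-t ^ 2 / 2) with hw
  have hwm : Measurable w := by fun_prop
  have hw0 : ∀ t ∈ Set.Ioi (0 : ℝ), 0 ≤ w t := fun t ht =>
    mul_nonneg (Real.rpow_nonneg (le_of_lt ht) _) (Real.exp_pos _).le
  have hsinh (t : ℝ) := (Real.hasSum_sinh (t * |x|)).mul_left (w t)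
  have key := hasSum_integral_of_dominated_convergence
    (μ := volume.restrict (Set.Ioi (0 : ℝ)))
    (F := fun (k : ℕ) t => w t * ((-1) ^ k * (t * x) ^ (2 * k + 1) / (2 * k + 1).factorial))
    (f := fun t => w t * Real.sin (t * x))
    (fun k t => w t * ((t * |x|) ^ (2 * k + 1) / (2 * k + 1).factorial))
    (fun k => by
      apply Measurable.aestronglyMeasurable
      fun_prop)
    (fun k => by
      filter_upwards [ae_restrict_mem measurableSet_Ioi] with t ht
      rw [norm_mul, Real.norm_of_nonneg (hw0 t ht), norm_div, norm_mul, norm_pow, norm_pow,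
        norm_mul]
      simp [abs_of_pos (show 0 < t from ht)])
    (Filter.Eventually.of_forall fun t => (hsinh t).summable)
    (by
      simp only [fun t => (hsinh t).tsum_eq]
      refine Integrable.mono' ((integrableOn_rpow_mul_exp_neg_mul_sq (b := 1 / 4)
        (by norm_num) hs).const_mul (Real.exp (x ^ 2))) ?_ ?_
      · apply Measurable.aestronglyMeasurable
        have := Real.measurable_sinh
        fun_prop
      · filter_upwards [ae_restrict_mem measurableSet_Ioi] with t ht
        have ht' : 0 < t := ht
        rw [Real.norm_of_nonneg (mul_nonneg (hw0 t ht)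
          (Real.sinh_nonneg_iff.2 (by positivity)))]
        have := mul_le_mul_of_nonneg_left (sinh_mul_gaussian_le x t)
          (Real.rpow_nonneg ht'.le s)
        simp only [hw]
        linarith)
    (Filter.Eventually.of_forall fun t => (Real.hasSum_sin (t * x)).mul_left (w t))
  rw [← key.tsum_eq, oneF1, ← tsum_mul_left]
  refine tsum_congr fun k => ?_
  have hmom : ∫ t in Set.Ioi (0 : ℝ),
      w t * ((-1) ^ k * (t * x) ^ (2 * k + 1) / (2 * k + 1).factorial) =
      ((-1) ^ k * x ^ (2 * k + 1) / (2 * k + 1).factorial) *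
        ∫ t in Set.Ioi (0 : ℝ), t ^ (s + (2 * k + 1 : ℕ)) * Real.exp (-t ^ 2 / 2) := by
    rw [← integral_const_mul]
    refine setIntegral_congr_fun measurableSet_Ioi fun t ht => ?_
    simp only [hw]
    rw [Real.rpow_add_natCast (ne_of_gt ht), mul_pow]
    ring
  have hP : (0 : ℝ) < (ascPochhammer ℝ k).eval (3 / 2 : ℝ) :=
    ascPochhammer_pos k _ (by norm_num)
  have hk : (0 : ℝ) ≤ (2 * k + 1 : ℕ) := Nat.cast_nonneg _
  rw [hmom, integral_Ioi_rpow_mul_gaussian (by linarith),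
    show (s + (2 * k + 1 : ℕ) + 1) / 2 = (s + 2) / 2 + k by push_cast; ring,
    Gamma_add_nat_eq (by linarith), factorial_two_mul_add_one_eq,
    show (s + (2 * k + 1 : ℕ) - 1) / 2 = s / 2 + k by push_cast; ring,
    Real.rpow_add_natCast two_ne_zero, div_pow, neg_pow (x ^ 2),
    show (4 : ℝ) ^ k = 2 ^ k * 2 ^ k by rw [← mul_pow]; norm_num]
  field_simp
  ring

theorem IFT_odd_moment (α : ℝ) (hα₀ : 0 < α) (hα₂ : α < 2) (m : ℕ) (x : ℝ) :
    IFT (fun ξ => ((Real.exp (-ξ ^ 2 / 2) * ξ ^ (2 * m + 1) * |ξ| ^ α : ℝ) : ℂ)) x =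
      Complex.I *
        ↑((2 : ℝ) ^ ((2 * (m : ℝ) + 2 + α) / 2) / Real.sqrt Real.pi *
            Real.Gamma ((2 * (m : ℝ) + 3 + α) / 2) * x *
            oneF1 ((2 * (m : ℝ) + 3 + α) / 2) (3 / 2) (-x ^ 2 / 2)) := by
  set s : ℝ := α + (2 * m + 1 : ℕ) with hs_def
  have hm : (0 : ℝ) ≤ (2 * m + 1 : ℕ) := Nat.cast_nonneg _
  have hs : -1 < s := by linarith
  have hs0 : s ≠ 0 := by linarith
  have habs (ξ : ℝ) : |ξ| ^ s = |ξ| ^ (2 * m + 1) * |ξ| ^ α := by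
    rw [hs_def, Real.rpow_add_natCast' (abs_nonneg _) hs0, mul_comm]
  set h : ℝ → ℂ := fun ξ => ((Real.exp (-ξ ^ 2 / 2) * ξ ^ (2 * m + 1) * |ξ| ^ α : ℝ) : ℂ) *
    Complex.exp (Complex.I * x * ξ) with hh
  have hint : Integrable h := by
    refine (integrable_abs_rpow_mul_gaussian hs).mono' ?_ ?_
    · apply Measurable.aestronglyMeasurable
      fun_prop
    · refine Filter.Eventually.of_forall fun ξ => le_of_eq ?_
      have : ‖Complex.exp (Complex.I * x * ξ)‖ = 1 := by
        rw [show Complex.I * x * ξ = ((x * ξ : ℝ) : ℂ) * Complex.I by push_cast; ring]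
        exact Complex.norm_exp_ofReal_mul_I _
      rw [hh, norm_mul, this, Complex.norm_real, habs, Real.norm_eq_abs, abs_mul, abs_mul,
        abs_pow, abs_of_pos (Real.exp_pos _), abs_of_nonneg (Real.rpow_nonneg (abs_nonneg ξ) α)]
      ring
  have hsymm (ξ : ℝ) : h ξ + h (-ξ) =
      2 * Complex.I * ((|ξ| ^ s * Real.exp (-|ξ| ^ 2 / 2) * Real.sin (|ξ| * x) : ℝ) : ℂ) := by
    have hodd : |ξ| ^ (2 * m + 1) * Real.sin (|ξ| * x) = ξ ^ (2 * m + 1) * Real.sin (ξ * x) := by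
      rcases abs_choice ξ with e | e <;> rw [e]
      rw [neg_mul, Real.sin_neg, (odd_two_mul_add_one m).neg_pow]
      ring
    have hexp : Complex.exp (Complex.I * x * ξ) - Complex.exp (-(Complex.I * x * ξ)) =
        2 * Complex.I * (Real.sin (ξ * x) : ℝ) := by
      rw [Complex.ofReal_sin, Complex.sin]
      push_cast
      rw [show Complex.I * x * ξ = ξ * x * Complex.I by ring, ← neg_mul]
      linear_combination (Complex.exp ((ξ * x) * Complex.I) - Complex.exp (-(ξ * x) * Complex.I))
        * Complex.I_sq
    rw [habs, show |ξ| ^ (2 * m + 1) * |ξ| ^ α * Real.exp (-|ξ| ^ 2 / 2) * Real.sin (|ξ| * x) =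
      Real.exp (-ξ ^ 2 / 2) * ξ ^ (2 * m + 1) * |ξ| ^ α * Real.sin (ξ * x) by
        rw [sq_abs]; linear_combination |ξ| ^ α * Real.exp (-ξ ^ 2 / 2) * hodd]
    simp only [hh]
    rw [neg_sq, abs_neg, (odd_two_mul_add_one m).neg_pow,
      Complex.ofReal_mul (_ * _ * _) (Real.sin _)]
    rw [mul_left_comm, ← hexp]
    push_cast
    rw [mul_neg (Complex.I * x) (ξ : ℂ)]
    ring
  have hI : ∫ ξ, h ξ = 2 * Complex.I * ((2 ^ (s / 2) * Real.Gamma ((s + 2) / 2) * x *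
        oneF1 ((s + 2) / 2) (3 / 2) (-x ^ 2 / 2) : ℝ) : ℂ) := by
    -- Symmetrizing under `ξ ↦ -ξ` removes the even (cosine) part of the exponential.
    have h2 : 2 * ∫ ξ, h ξ = ∫ ξ, (h ξ + h (-ξ)) := by
      rw [integral_add hint hint.comp_neg, integral_neg_eq_self h, two_mul]
    simp only [hsymm] at h2
    rw [integral_const_mul, integral_complex_ofReal,
      integral_comp_abs (f := fun t => t ^ s * Real.exp (-t ^ 2 / 2) * Real.sin (t * x)),
      integral_Ioi_rpow_mul_gaussian_mul_sin hs] at h2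
    apply mul_left_cancel₀ (two_ne_zero' ℂ)
    rw [h2]
    push_cast
    ring
  have hsqrt : (Real.sqrt (2 * π))⁻¹ * (2 * 2 ^ (s / 2)) = 2 ^ ((s + 1) / 2) / Real.sqrt π := by
    have h2 : (2 : ℝ) ^ ((s + 1) / 2) = 2 ^ (s / 2) * Real.sqrt 2 := by
      rw [Real.sqrt_eq_rpow, ← Real.rpow_add two_pos]
      congr 1
      ring
    rw [h2, Real.sqrt_mul two_pos.le]
    have : 0 < Real.sqrt π := Real.sqrt_pos.2 Real.pi_pos
    field_simp
    rw [Real.sq_sqrt two_pos.le]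
  rw [IFT, show (2 * (m : ℝ) + 2 + α) / 2 = (s + 1) / 2 by rw [hs_def]; push_cast; ring,
    show (2 * (m : ℝ) + 3 + α) / 2 = (s + 2) / 2 by rw [hs_def]; push_cast; ring, ← hsqrt]
  change _ * ∫ ξ, h ξ = _
  rw [hI]
  push_cast
  ring
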